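/- arXiv:math/0204206 — 2 statements merged into one kernel-verified Lean document; each statement's English description precedes it below -/
import Mathlib

section
/- Let γ be a non-resonant Gelfand–Zetlin array. Then for every 1 ≤ n ≤ N−2 and every function f of the Gelfand–Zetlin variables, the Serre relations hold pointwise at γ: [E_{n,n+1},[E_{n,n+1},E_{n+1,n+2}]]f(γ) = 0, [E_{n+1,n+2},[E_{n,n+1},E_{n+1,n+2}]]f(γ) = 0, [E_{n+1,n},[E_{n+1,n},E_{n+2,n+1}]]f(γ) = 0, and [E_{n+2,n+1},[E_{n+1,n},E_{n+2,n+1}]]f(γ) = 0, where [A,B]f denotes A(Bf) − B(Af). -/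
open Finset

noncomputable section

/-- A Gelfand–Zetlin array: complex values `γ n j`, relevant for `1 ≤ j ≤ n ≤ N`. -/
abbrev GZ := ℕ → ℕ → ℂ

/-- Shift of the single variable `γ n j` by `c`. -/
def gzShift (c : ℂ) (n j : ℕ) (γ : GZ) : GZ :=
  fun a b => if a = n ∧ b = j then γ a b + c else γ a b

/-- The raising Gelfand–Zetlin operator `E_{n,n+1}`. -/
def Eraise (ℏ : ℝ) (n : ℕ) (f : GZ → ℂ) : GZ → ℂ := fun γ =>
  -(1 / (Complex.I * ℏ)) * ∑ j ∈ Icc 1 n,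
    ((∏ r ∈ Icc 1 (n + 1), (γ n j - γ (n + 1) r - Complex.I * ℏ / 2)) /
      ∏ s ∈ (Icc 1 n).erase j, (γ n j - γ n s)) * f (gzShift (-(Complex.I * ℏ)) n j γ)

/-- The lowering Gelfand–Zetlin operator `E_{n+1,n}`. -/
def Elower (ℏ : ℝ) (n : ℕ) (f : GZ → ℂ) : GZ → ℂ := fun γ =>
  (1 / (Complex.I * ℏ)) * ∑ j ∈ Icc 1 n,
    ((∏ r ∈ Icc 1 (n - 1), (γ n j - γ (n - 1) r + Complex.I * ℏ / 2)) /
      ∏ s ∈ (Icc 1 n).erase j, (γ n j - γ n s)) * f (gzShift (Complex.I * ℏ) n j γ)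

/-- Commutator of two operators on functions of the Gelfand–Zetlin variables. -/
def gzComm (A B : (GZ → ℂ) → (GZ → ℂ)) (f : GZ → ℂ) : GZ → ℂ :=
  fun γ => A (B f) γ - B (A f) γ

/-- Non-resonance: no two same-level entries differ by an integer multiple of `iℏ`. -/
def NonResonant (ℏ : ℝ) (N : ℕ) (γ : GZ) : Prop :=
  ∀ n ∈ Icc 1 (N - 1), ∀ j s : ℕ, 1 ≤ j → j < s → s ≤ n →
    ∀ m : ℤ, (γ n j - γ n s) / (Complex.I * ℏ) ≠ (m : ℂ)

/-- Generic coefficient. -/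
def gzCf (c : ℂ) (m : ℕ) (J : Finset ℕ) (m' : ℕ) (J' : Finset ℕ) (j : ℕ) (γ : GZ) : ℂ :=
  (∏ r ∈ J', (γ m j - γ m' r + c / 2)) / ∏ s ∈ J.erase j, (γ m j - γ m s)

/-- Generic operator. -/
def gzOp (c : ℂ) (m : ℕ) (J : Finset ℕ) (m' : ℕ) (J' : Finset ℕ) (f : GZ → ℂ) : GZ → ℂ :=
  fun γ => ∑ j ∈ J, gzCf c m J m' J' j γ * f (gzShift c m j γ)

lemma gzShift_comm (c : ℂ) (m j m' k : ℕ) (γ : GZ) :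
    gzShift c m j (gzShift c m' k γ) = gzShift c m' k (gzShift c m j γ) := by
  funext a b
  simp only [gzShift]
  split_ifs <;> ring

lemma gzCf_pair (c : ℂ) (m : ℕ) (J : Finset ℕ) (m' : ℕ) (J' : Finset ℕ) (j l k : ℕ)
    (hl : l ∈ J) (hlj : l ≠ j) (hk : k ∈ J') (γ γ' : GZ)
    (h1 : ∀ s ∈ (J.erase j).erase l, γ' m s = γ m s)
    (h2 : ∀ r ∈ J'.erase k, γ' m' r = γ m' r) :
    gzCf c m J m' J' j γ' =
      (γ' m j - γ' m' k + c / 2) * (∏ r ∈ J'.erase k, (γ' m j - γ m' r + c / 2)) *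
      (γ' m j - γ' m l)⁻¹ * (∏ s ∈ (J.erase j).erase l, (γ' m j - γ m s))⁻¹ := by
  unfold gzCf
  rw [← Finset.mul_prod_erase J' _ hk,
    ← Finset.mul_prod_erase (J.erase j) _ (Finset.mem_erase.2 ⟨hlj, hl⟩),
    Finset.prod_congr rfl (fun r hr => by rw [h2 r hr] :
      ∀ r ∈ J'.erase k, γ' m j - γ' m' r + c / 2 = γ' m j - γ m' r + c / 2),
    Finset.prod_congr rfl (fun r hr => by rw [h1 r hr] :
      ∀ s ∈ (J.erase j).erase l, γ' m j - γ' m s = γ' m j - γ m s)]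
  rw [div_eq_mul_inv, mul_inv]
  ring

lemma gzCf_one (c : ℂ) (m : ℕ) (J : Finset ℕ) (m' : ℕ) (J' : Finset ℕ) (j k : ℕ)
    (hk : k ∈ J') (γ γ' : GZ)
    (h1 : ∀ s ∈ J.erase j, γ' m s = γ m s)
    (h2 : ∀ r ∈ J'.erase k, γ' m' r = γ m' r) :
    gzCf c m J m' J' j γ' =
      (γ' m j - γ' m' k + c / 2) * (∏ r ∈ J'.erase k, (γ' m j - γ m' r + c / 2)) *
      (∏ s ∈ J.erase j, (γ' m j - γ m s))⁻¹ := by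
  unfold gzCf
  rw [← Finset.mul_prod_erase J' _ hk,
    Finset.prod_congr rfl (fun r hr => by rw [h2 r hr] :
      ∀ r ∈ J'.erase k, γ' m j - γ' m' r + c / 2 = γ' m j - γ m' r + c / 2),
    Finset.prod_congr rfl (fun r hr => by rw [h1 r hr] :
      ∀ s ∈ J.erase j, γ' m j - γ' m s = γ' m j - γ m s)]
  rw [div_eq_mul_inv]

lemma gzCf_den (c : ℂ) (m : ℕ) (J : Finset ℕ) (m' : ℕ) (J' : Finset ℕ) (j l : ℕ)
    (hl : l ∈ J) (hlj : l ≠ j) (γ γ' : GZ)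
    (h1 : ∀ s ∈ (J.erase j).erase l, γ' m s = γ m s)
    (h2 : ∀ r ∈ J', γ' m' r = γ m' r) :
    gzCf c m J m' J' j γ' =
      (∏ r ∈ J', (γ' m j - γ m' r + c / 2)) *
      (γ' m j - γ' m l)⁻¹ * (∏ s ∈ (J.erase j).erase l, (γ' m j - γ m s))⁻¹ := by
  unfold gzCf
  rw [← Finset.mul_prod_erase (J.erase j) _ (Finset.mem_erase.2 ⟨hlj, hl⟩),
    Finset.prod_congr rfl (fun r hr => by rw [h2 r hr] :
      ∀ r ∈ J', γ' m j - γ' m' r + c / 2 = γ' m j - γ m' r + c / 2),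
    Finset.prod_congr rfl (fun r hr => by rw [h1 r hr] :
      ∀ s ∈ (J.erase j).erase l, γ' m j - γ' m s = γ' m j - γ m s)]
  rw [div_eq_mul_inv, mul_inv]
  ring

lemma gzCf_num (c : ℂ) (m : ℕ) (J : Finset ℕ) (m' : ℕ) (J' : Finset ℕ) (j k l : ℕ)
    (hk : k ∈ J') (hl : l ∈ J') (hlk : l ≠ k) (γ γ' : GZ)
    (h1 : ∀ s, γ' m s = γ m s)
    (h2 : ∀ r ∈ (J'.erase k).erase l, γ' m' r = γ m' r) :
    gzCf c m J m' J' j γ' =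
      (γ m j - γ' m' k + c / 2) * (γ m j - γ' m' l + c / 2) *
      ((∏ r ∈ (J'.erase k).erase l, (γ m j - γ m' r + c / 2)) *
      (∏ s ∈ J.erase j, (γ m j - γ m s))⁻¹) := by
  unfold gzCf
  simp only [h1]
  rw [← Finset.mul_prod_erase J' _ hk,
    ← Finset.mul_prod_erase (J'.erase k) _ (Finset.mem_erase.2 ⟨hlk, hl⟩),
    Finset.prod_congr rfl (fun r hr => by rw [h2 r hr] :
      ∀ r ∈ (J'.erase k).erase l, γ m j - γ' m' r + c / 2 = γ m j - γ m' r + c / 2)]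
  rw [div_eq_mul_inv]
  ring

/-- Non-resonance of one level with respect to the shift `c`. -/
def gzNR (c : ℂ) (m : ℕ) (J : Finset ℕ) (γ : GZ) : Prop :=
  ∀ j ∈ J, ∀ l ∈ J, j ≠ l → γ m j - γ m l ≠ 0 ∧ γ m j - γ m l - c ≠ 0

/-- bracket for the first relation -/
def gzG1 (c : ℂ) (m : ℕ) (J : Finset ℕ) (m' : ℕ) (J' : Finset ℕ) (k j l : ℕ) (γ : GZ) : ℂ :=
  gzCf c m J m' J' j γ * gzCf c m J m' J' l (gzShift c m j γ)
  - 2 * (gzCf c m J m' J' j γ * gzCf c m J m' J' l (gzShift c m' k (gzShift c m j γ)))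
  + gzCf c m J m' J' j (gzShift c m' k γ) *
      gzCf c m J m' J' l (gzShift c m j (gzShift c m' k γ))

lemma gz_alg1 (c x x' y U U' D D' : ℂ) (h : x - x' ≠ 0) (h' : x' - x ≠ 0)
    (h1 : x - x' - c ≠ 0) (h2 : x' - x - c ≠ 0) :
    ((x - y + c / 2) * U * (x - x')⁻¹ * D * ((x' - y + c / 2) * U' * (x' - (x + c))⁻¹ * D')
    - 2 * ((x - y + c / 2) * U * (x - x')⁻¹ * D *
        ((x' - (y + c) + c / 2) * U' * (x' - (x + c))⁻¹ * D'))
    + (x - (y + c) + c / 2) * U * (x - x')⁻¹ * D *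
        ((x' - (y + c) + c / 2) * U' * (x' - (x + c))⁻¹ * D')) +
    ((x' - y + c / 2) * U' * (x' - x)⁻¹ * D' * ((x - y + c / 2) * U * (x - (x' + c))⁻¹ * D)
    - 2 * ((x' - y + c / 2) * U' * (x' - x)⁻¹ * D' *
        ((x - (y + c) + c / 2) * U * (x - (x' + c))⁻¹ * D))
    + (x' - (y + c) + c / 2) * U' * (x' - x)⁻¹ * D' *
        ((x - (y + c) + c / 2) * U * (x - (x' + c))⁻¹ * D)) = 0 := by
  rw [← sub_sub x' x c, ← sub_sub x x' c]
  have e : (x' - x)⁻¹ = -(x - x')⁻¹ := by rw [← neg_sub x x', inv_neg]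
  have e1 : (x' - x - c) * (x' - x - c)⁻¹ = 1 := mul_inv_cancel₀ h2
  have e2 : (x - x' - c) * (x - x' - c)⁻¹ = 1 := mul_inv_cancel₀ h1
  rw [e]
  generalize (x - x')⁻¹ = p at *
  generalize (x' - x - c)⁻¹ = q at *
  generalize (x - x' - c)⁻¹ = r at *
  linear_combination (-c * p * U * U' * D * D') * e1 + (c * p * U * U' * D * D') * e2

lemma gz_alg2 (c x y y' V W W' D D' : ℂ) (h : y - y' ≠ 0)
    (h1 : y - y' - c ≠ 0) (h2 : y' - y - c ≠ 0) :
    (((x - y + c / 2) * (x - y' + c / 2) * V) * (W * (y - y')⁻¹ * D)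
        * (W' * (y' - (y + c))⁻¹ * D')
    - 2 * ((W * (y - y')⁻¹ * D) * ((x - (y + c) + c / 2) * (x - y' + c / 2) * V)
        * (W' * (y' - (y + c))⁻¹ * D'))
    + (W * (y - y')⁻¹ * D) * (W' * (y' - (y + c))⁻¹ * D') *
        ((x - (y + c) + c / 2) * (x - (y' + c) + c / 2) * V)) +
    (((x - y + c / 2) * (x - y' + c / 2) * V) * (W' * (y' - y)⁻¹ * D')
        * (W * (y - (y' + c))⁻¹ * D)
    - 2 * ((W' * (y' - y)⁻¹ * D') * ((x - y + c / 2) * (x - (y' + c) + c / 2) * V)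
        * (W * (y - (y' + c))⁻¹ * D))
    + (W' * (y' - y)⁻¹ * D') * (W * (y - (y' + c))⁻¹ * D) *
        ((x - (y + c) + c / 2) * (x - (y' + c) + c / 2) * V)) = 0 := by
  rw [← sub_sub y' y c, ← sub_sub y y' c]
  have e : (y' - y)⁻¹ = -(y - y')⁻¹ := by rw [← neg_sub y y', inv_neg]
  have e1 : (y' - y - c) * (y' - y - c)⁻¹ = 1 := mul_inv_cancel₀ h2
  have e2 : (y - y' - c) * (y - y' - c)⁻¹ = 1 := mul_inv_cancel₀ h1
  rw [e]
  generalize (y - y')⁻¹ = p at *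
  generalize (y' - y - c)⁻¹ = q at *
  generalize (y - y' - c)⁻¹ = r at *
  linear_combination (-c * p * V * W * W' * D * D') * e1 + (c * p * V * W * W' * D * D') * e2

lemma gzG1_antisymm (c : ℂ) (m : ℕ) (J : Finset ℕ) (m' : ℕ) (J' : Finset ℕ) (hm : m ≠ m')
    (k j l : ℕ) (hk : k ∈ J') (hj : j ∈ J) (hl : l ∈ J) (γ : GZ) (hγ : gzNR c m J γ) :
    gzG1 c m J m' J' k j l γ + gzG1 c m J m' J' k l j γ = 0 := by
  by_cases hjl : j = l
  · subst hjl
    unfold gzG1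
    rw [gzCf_one c m J m' J' j k hk γ γ, gzCf_one c m J m' J' j k hk γ (gzShift c m j γ),
      gzCf_one c m J m' J' j k hk γ (gzShift c m' k (gzShift c m j γ)),
      gzCf_one c m J m' J' j k hk γ (gzShift c m' k γ),
      gzCf_one c m J m' J' j k hk γ (gzShift c m j (gzShift c m' k γ))]
    · simp only [gzShift, hm, hm.symm, and_self, false_and, and_false, if_true, if_false]
      ring
    all_goals
      intro s hs
      simp only [Finset.mem_erase] at hs
      simp [gzShift, hm, hm.symm, hs.1]
  · have hlj : l ≠ j := fun h => hjl h.symm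
    unfold gzG1
    rw [gzCf_pair c m J m' J' j l k hl hlj hk γ γ,
      gzCf_pair c m J m' J' l j k hj hjl hk γ (gzShift c m j γ),
      gzCf_pair c m J m' J' l j k hj hjl hk γ (gzShift c m' k (gzShift c m j γ)),
      gzCf_pair c m J m' J' j l k hl hlj hk γ (gzShift c m' k γ),
      gzCf_pair c m J m' J' l j k hj hjl hk γ (gzShift c m j (gzShift c m' k γ)),
      gzCf_pair c m J m' J' l j k hj hjl hk γ γ,
      gzCf_pair c m J m' J' j l k hl hlj hk γ (gzShift c m l γ),
      gzCf_pair c m J m' J' j l k hl hlj hk γ (gzShift c m' k (gzShift c m l γ)),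
      gzCf_pair c m J m' J' l j k hj hjl hk γ (gzShift c m' k γ),
      gzCf_pair c m J m' J' j l k hl hlj hk γ (gzShift c m l (gzShift c m' k γ))]
    · simp only [gzShift, hm, hm.symm, hjl, hlj, and_self, false_and, and_false, if_true, if_false]
      exact gz_alg1 c _ _ _ _ _ _ _ (hγ j hj l hl hjl).1 (hγ l hl j hj hlj).1
        (hγ j hj l hl hjl).2 (hγ l hl j hj hlj).2
    all_goals
      intro s hs
      simp only [Finset.mem_erase] at hs
      simp [*, gzShift, hm.symm]

/-- bracket for the second relation -/
def gzG2 (c : ℂ) (m : ℕ) (J : Finset ℕ) (m' : ℕ) (J' : Finset ℕ) (m'' : ℕ) (J'' : Finset ℕ)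
    (j k l : ℕ) (γ : GZ) : ℂ :=
  gzCf c m J m' J' j γ * gzCf c m' J' m'' J'' k (gzShift c m j γ) *
    gzCf c m' J' m'' J'' l (gzShift c m' k (gzShift c m j γ))
  - 2 * (gzCf c m' J' m'' J'' k γ * gzCf c m J m' J' j (gzShift c m' k γ) *
    gzCf c m' J' m'' J'' l (gzShift c m j (gzShift c m' k γ)))
  + gzCf c m' J' m'' J'' k γ * gzCf c m' J' m'' J'' l (gzShift c m' k γ) *
    gzCf c m J m' J' j (gzShift c m' l (gzShift c m' k γ))

lemma gzCf_shift_other (c : ℂ) (m : ℕ) (J : Finset ℕ) (m' : ℕ) (J' : Finset ℕ) (a j b : ℕ)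
    (h : m ≠ a) (h' : m' ≠ a) (γ : GZ) :
    gzCf c m J m' J' j (gzShift c a b γ) = gzCf c m J m' J' j γ := by
  simp [gzCf, gzShift, h, h']

lemma gzG2_antisymm (c : ℂ) (m : ℕ) (J : Finset ℕ) (m' : ℕ) (J' : Finset ℕ)
    (m'' : ℕ) (J'' : Finset ℕ) (hm : m ≠ m') (hm' : m' ≠ m'') (hm'' : m ≠ m'')
    (j k l : ℕ) (hk : k ∈ J') (hl : l ∈ J') (γ : GZ) (hγ : gzNR c m' J' γ) :
    gzG2 c m J m' J' m'' J'' j k l γ + gzG2 c m J m' J' m'' J'' j l k γ = 0 := by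
  unfold gzG2
  rw [gzShift_comm c m' k m j, gzShift_comm c m' l m j]
  simp only [gzCf_shift_other c m' J' m'' J'' m _ _ hm.symm hm''.symm]
  by_cases hkl : k = l
  · subst hkl
    rw [gzCf_one c m J m' J' j k hk γ γ,
      gzCf_one c m J m' J' j k hk γ (gzShift c m' k γ),
      gzCf_one c m J m' J' j k hk γ (gzShift c m' k (gzShift c m' k γ))]
    · simp only [gzShift, hm, hm.symm, and_self, false_and, and_false, if_true, if_false]
      ring
    all_goals
      intro s hs
      simp only [Finset.mem_erase] at hs
      simp [gzShift, hm, hm.symm, hs.1]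
  · have hlk : l ≠ k := fun h => hkl h.symm
    rw [gzCf_num c m J m' J' j k l hk hl hlk γ γ,
      gzCf_num c m J m' J' j k l hk hl hlk γ (gzShift c m' k γ),
      gzCf_num c m J m' J' j k l hk hl hlk γ (gzShift c m' l γ),
      gzCf_num c m J m' J' j k l hk hl hlk γ (gzShift c m' l (gzShift c m' k γ)),
      gzCf_num c m J m' J' j k l hk hl hlk γ (gzShift c m' k (gzShift c m' l γ)),
      gzCf_den c m' J' m'' J'' k l hl hlk γ γ,
      gzCf_den c m' J' m'' J'' l k hk hkl γ (gzShift c m' k γ),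
      gzCf_den c m' J' m'' J'' l k hk hkl γ γ,
      gzCf_den c m' J' m'' J'' k l hl hlk γ (gzShift c m' l γ)]
    · simp only [gzShift, hm, hm.symm, hkl, hlk, and_self, false_and, and_false, if_true, if_false]
      exact gz_alg2 c _ _ _ _ _ _ _ _ (hγ k hk l hl hkl).1
        (hγ k hk l hl hkl).2 (hγ l hl k hk hlk).2
    all_goals
      intro s
      try intro hs
      try simp only [Finset.mem_erase] at hs
      simp [*, gzShift, hm, hm.symm, hm'.symm]

lemma gz_sum_antisymm (J : Finset ℕ) (F : ℕ → ℕ → ℂ)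
    (h : ∀ j ∈ J, ∀ l ∈ J, F j l + F l j = 0) : ∑ j ∈ J, ∑ l ∈ J, F j l = 0 := by
  have h1 : ∑ j ∈ J, ∑ l ∈ J, F j l + ∑ j ∈ J, ∑ l ∈ J, F l j = 0 := by
    rw [← Finset.sum_add_distrib]
    refine Finset.sum_eq_zero fun j hj => ?_
    rw [← Finset.sum_add_distrib]
    exact Finset.sum_eq_zero fun l hl => h j hj l hl
  rw [Finset.sum_comm (f := fun j l => F l j)] at h1
  linear_combination h1 / 2

lemma gzOp3 (c : ℂ) (m₁ m₁' m₂ m₂' m₃ m₃' : ℕ) (J₁ J₁' J₂ J₂' J₃ J₃' : Finset ℕ)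
    (f : GZ → ℂ) (γ : GZ) :
    gzOp c m₁ J₁ m₁' J₁' (gzOp c m₂ J₂ m₂' J₂' (gzOp c m₃ J₃ m₃' J₃' f)) γ =
    ∑ a ∈ J₁, ∑ b ∈ J₂, ∑ d ∈ J₃, gzCf c m₁ J₁ m₁' J₁' a γ *
      gzCf c m₂ J₂ m₂' J₂' b (gzShift c m₁ a γ) *
      gzCf c m₃ J₃ m₃' J₃' d (gzShift c m₂ b (gzShift c m₁ a γ)) *
      f (gzShift c m₃ d (gzShift c m₂ b (gzShift c m₁ a γ))) := by
  simp only [gzOp, Finset.mul_sum, mul_assoc]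

lemma gz_serre1 (c : ℂ) (m m' m'' : ℕ) (J J' J'' : Finset ℕ)
    (hm : m ≠ m') (hm'' : m ≠ m'') (γ : GZ) (hγ : gzNR c m J γ)
    (f : GZ → ℂ) :
    gzOp c m J m' J' (gzOp c m J m' J' (gzOp c m' J' m'' J'' f)) γ
    - 2 * gzOp c m J m' J' (gzOp c m' J' m'' J'' (gzOp c m J m' J' f)) γ
    + gzOp c m' J' m'' J'' (gzOp c m J m' J' (gzOp c m J m' J' f)) γ = 0 := by
  have key : ∑ k ∈ J', ∑ j ∈ J, ∑ l ∈ J, gzCf c m' J' m'' J'' k γ *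
      gzG1 c m J m' J' k j l γ * f (gzShift c m' k (gzShift c m l (gzShift c m j γ))) = 0 := by
    refine Finset.sum_eq_zero fun k hk => gz_sum_antisymm J _ fun j hj l hl => ?_
    rw [gzShift_comm c m j m l]
    have := gzG1_antisymm c m J m' J' hm k j l hk hj hl γ hγ
    linear_combination (gzCf c m' J' m'' J'' k γ *
      f (gzShift c m' k (gzShift c m l (gzShift c m j γ)))) * this
  have s1 : gzOp c m J m' J' (gzOp c m J m' J' (gzOp c m' J' m'' J'' f)) γ =
      ∑ k ∈ J', ∑ j ∈ J, ∑ l ∈ J, gzCf c m' J' m'' J'' k γ *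
      (gzCf c m J m' J' j γ * gzCf c m J m' J' l (gzShift c m j γ)) *
      f (gzShift c m' k (gzShift c m l (gzShift c m j γ))) := by
    rw [gzOp3, Finset.sum_comm (s := J')]
    refine Finset.sum_congr rfl fun j _ => ?_
    rw [Finset.sum_comm]
    refine Finset.sum_congr rfl fun k _ => Finset.sum_congr rfl fun l _ => ?_
    simp only [gzCf_shift_other c m' J' m'' J'' m _ _ hm.symm hm''.symm]
    ring
  have s2 : gzOp c m J m' J' (gzOp c m' J' m'' J'' (gzOp c m J m' J' f)) γ =
      ∑ k ∈ J', ∑ j ∈ J, ∑ l ∈ J, gzCf c m' J' m'' J'' k γ *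
      (gzCf c m J m' J' j γ * gzCf c m J m' J' l (gzShift c m' k (gzShift c m j γ))) *
      f (gzShift c m' k (gzShift c m l (gzShift c m j γ))) := by
    rw [gzOp3, Finset.sum_comm (s := J')]
    refine Finset.sum_congr rfl fun j _ => ?_
    refine Finset.sum_congr rfl fun k _ => Finset.sum_congr rfl fun l _ => ?_
    simp only [gzCf_shift_other c m' J' m'' J'' m _ _ hm.symm hm''.symm]
    rw [gzShift_comm c m l m' k]
    ring
  have s3 : gzOp c m' J' m'' J'' (gzOp c m J m' J' (gzOp c m J m' J' f)) γ =
      ∑ k ∈ J', ∑ j ∈ J, ∑ l ∈ J, gzCf c m' J' m'' J'' k γ *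
      (gzCf c m J m' J' j (gzShift c m' k γ) *
        gzCf c m J m' J' l (gzShift c m j (gzShift c m' k γ))) *
      f (gzShift c m' k (gzShift c m l (gzShift c m j γ))) := by
    rw [gzOp3]
    refine Finset.sum_congr rfl fun k _ => Finset.sum_congr rfl fun j _ =>
      Finset.sum_congr rfl fun l _ => ?_
    rw [gzShift_comm c m' k m l, gzShift_comm c m' k m j]
    ring
  rw [s1, s2, s3, ← key]
  simp only [Finset.mul_sum, ← Finset.sum_sub_distrib, ← Finset.sum_add_distrib]
  refine Finset.sum_congr rfl fun k _ => Finset.sum_congr rfl fun j _ =>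
      Finset.sum_congr rfl fun l _ => ?_
  unfold gzG1
  ring

lemma gz_serre2 (c : ℂ) (m m' m'' : ℕ) (J J' J'' : Finset ℕ)
    (hm : m ≠ m') (hm' : m' ≠ m'') (hm'' : m ≠ m'') (γ : GZ) (hγ : gzNR c m' J' γ)
    (f : GZ → ℂ) :
    gzOp c m J m' J' (gzOp c m' J' m'' J'' (gzOp c m' J' m'' J'' f)) γ
    - 2 * gzOp c m' J' m'' J'' (gzOp c m J m' J' (gzOp c m' J' m'' J'' f)) γ
    + gzOp c m' J' m'' J'' (gzOp c m' J' m'' J'' (gzOp c m J m' J' f)) γ = 0 := by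
  have key : ∑ j ∈ J, ∑ k ∈ J', ∑ l ∈ J', 
      gzG2 c m J m' J' m'' J'' j k l γ *
        f (gzShift c m j (gzShift c m' l (gzShift c m' k γ))) = 0 := by
    refine Finset.sum_eq_zero fun j hj => gz_sum_antisymm J' _ fun k hk l hl => ?_
    rw [gzShift_comm c m' k m' l]
    have := gzG2_antisymm c m J m' J' m'' J'' hm hm' hm'' j k l hk hl γ hγ
    linear_combination (f (gzShift c m j (gzShift c m' l (gzShift c m' k γ)))) * this
  rw [gzOp3, gzOp3, gzOp3, ← key]
  rw [Finset.sum_comm (s := J') (t := J)]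
  have s3 : ∀ F : ℕ → ℕ → ℕ → ℂ, ∑ k ∈ J', ∑ l ∈ J', ∑ j ∈ J, F k l j =
      ∑ j ∈ J, ∑ k ∈ J', ∑ l ∈ J', F k l j := by
    intro F
    rw [Finset.sum_comm (s := J) (t := J')]
    exact Finset.sum_congr rfl fun k _ => Finset.sum_comm
  rw [s3]
  simp only [Finset.mul_sum, ← Finset.sum_sub_distrib, ← Finset.sum_add_distrib]
  refine Finset.sum_congr rfl fun j _ => Finset.sum_congr rfl fun k _ =>
      Finset.sum_congr rfl fun l _ => ?_
  rw [gzShift_comm c m j m' l, gzShift_comm c m j m' k]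
  unfold gzG2
  rw [gzShift_comm c m j m' k]
  ring

lemma gzOp_smul (c : ℂ) (m : ℕ) (J : Finset ℕ) (m' : ℕ) (J' : Finset ℕ) (a : ℂ)
    (f : GZ → ℂ) :
    gzOp c m J m' J' (fun γ => a * f γ) = fun γ => a * gzOp c m J m' J' f γ := by
  funext γ
  simp only [gzOp, Finset.mul_sum]
  exact Finset.sum_congr rfl fun j _ => by ring

lemma gzOp_sub (c : ℂ) (m : ℕ) (J : Finset ℕ) (m' : ℕ) (J' : Finset ℕ)
    (f g : GZ → ℂ) :
    gzOp c m J m' J' (fun γ => f γ - g γ) =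
      fun γ => gzOp c m J m' J' f γ - gzOp c m J m' J' g γ := by
  funext γ
  simp only [gzOp, ← Finset.sum_sub_distrib]
  exact Finset.sum_congr rfl fun j _ => by ring

lemma gzComm_eq (A B : (GZ → ℂ) → (GZ → ℂ)) (f : GZ → ℂ) :
    gzComm A B f = fun γ => A (B f) γ - B (A f) γ := rfl

lemma Eraise_eq (ℏ : ℝ) (n : ℕ) : Eraise ℏ n = fun f γ => -(1 / (Complex.I * ℏ)) *
    gzOp (-(Complex.I * ℏ)) n (Icc 1 n) (n + 1) (Icc 1 (n + 1)) f γ := by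
  funext f γ
  simp only [Eraise, gzOp, gzCf, neg_div, ← sub_eq_add_neg]

lemma Elower_eq (ℏ : ℝ) (n : ℕ) : Elower ℏ n = fun f γ => (1 / (Complex.I * ℏ)) *
    gzOp (Complex.I * ℏ) n (Icc 1 n) (n - 1) (Icc 1 (n - 1)) f γ := by
  funext f γ
  simp only [Elower, gzOp, gzCf]

lemma gzNR_of (ℏ : ℝ) (hℏ : 0 < ℏ) (N : ℕ) (γ : GZ) (hγ : NonResonant ℏ N γ) (n : ℕ)
    (h1 : 1 ≤ n) (h2 : n ≤ N - 1) (e : ℤ) :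
    gzNR (e * (Complex.I * ℏ)) n (Icc 1 n) γ := by
  have hk : (Complex.I * (ℏ : ℂ)) ≠ 0 :=
    mul_ne_zero Complex.I_ne_zero (by exact_mod_cast hℏ.ne')
  have main : ∀ j ∈ Icc 1 n, ∀ l ∈ Icc 1 n, j ≠ l → ∀ m : ℤ,
      γ n j - γ n l ≠ m * (Complex.I * ℏ) := by
    intro j hj l hl hjl m h
    rw [Finset.mem_Icc] at hj hl
    rcases lt_or_gt_of_ne hjl with hlt | hlt
    · exact hγ n (Finset.mem_Icc.2 ⟨h1, h2⟩) j l hj.1 hlt hl.2 m (by rw [h, mul_div_cancel_right₀ _ hk])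
    · refine hγ n (Finset.mem_Icc.2 ⟨h1, h2⟩) l j hl.1 hlt hj.2 (-m) ?_
      rw [← neg_sub, h, neg_div, mul_div_cancel_right₀ _ hk, Int.cast_neg]
  intro j hj l hl hjl
  refine ⟨?_, ?_⟩
  · simpa using main j hj l hl hjl 0
  · exact sub_ne_zero.2 (main j hj l hl hjl e)

/-- the Serre relations for the Gelfand–Zetlin operators hold pointwise
at every non-resonant array. -/
theorem gz_serre_relations (ℏ : ℝ) (hℏ : 0 < ℏ) (N : ℕ) (hN : 2 ≤ N)
    (γ : GZ) (hγ : NonResonant ℏ N γ) :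
    ∀ n : ℕ, 1 ≤ n → n ≤ N - 2 → ∀ f : GZ → ℂ,
      gzComm (Eraise ℏ n) (gzComm (Eraise ℏ n) (Eraise ℏ (n + 1))) f γ = 0 ∧
      gzComm (Eraise ℏ (n + 1)) (gzComm (Eraise ℏ n) (Eraise ℏ (n + 1))) f γ = 0 ∧
      gzComm (Elower ℏ n) (gzComm (Elower ℏ n) (Elower ℏ (n + 1))) f γ = 0 ∧
      gzComm (Elower ℏ (n + 1)) (gzComm (Elower ℏ n) (Elower ℏ (n + 1))) f γ = 0 := by
  intro n hn1 hn2 f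
  have a1 := gzNR_of ℏ hℏ N γ hγ n hn1 (by omega) (-1)
  have a2 := gzNR_of ℏ hℏ N γ hγ (n + 1) (by omega) (by omega) (-1)
  have b1 := gzNR_of ℏ hℏ N γ hγ n hn1 (by omega) 1
  have b2 := gzNR_of ℏ hℏ N γ hγ (n + 1) (by omega) (by omega) 1
  simp only [Int.cast_neg, Int.cast_one, neg_mul, one_mul] at a1 a2 b1 b2
  have r1 := gz_serre1 _ n (n + 1) (n + 1 + 1) _ (Icc 1 (n + 1)) (Icc 1 (n + 1 + 1))
    (by omega) (by omega) γ a1 f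
  have r2 := gz_serre2 _ n (n + 1) (n + 1 + 1) (Icc 1 n) _ (Icc 1 (n + 1 + 1))
    (by omega) (by omega) (by omega) γ a2 f
  have l1 := gz_serre2 _ (n + 1) n (n - 1) (Icc 1 (n + 1)) _ (Icc 1 (n - 1))
    (by omega) (by omega) (by omega) γ b1 f
  have l2 := gz_serre1 _ (n + 1) n (n - 1) _ (Icc 1 n) (Icc 1 (n - 1))
    (by omega) (by omega) γ b2 f
  simp only [gzComm_eq, Eraise_eq, Elower_eq, gzOp_smul, gzOp_sub, Nat.add_sub_cancel]
  generalize 1 / (Complex.I * (ℏ : ℂ)) = a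
  refine ⟨?_, ?_, ?_, ?_⟩
  · linear_combination (-a ^ 3) * r1
  · linear_combination (a ^ 3) * r2
  · linear_combination (a ^ 3) * l1
  · linear_combination (-a ^ 3) * l2
end
end

section
/- Fix ℏ > 0, N ≥ 2, complex numbers γ_{N1},…,γ_{NN}, and real numbers x_1,…,x_N. Let η = (η_{nj}), 1 ≤ j ≤ n ≤ N−1, be real numbers, set η_{Nm} := Im γ_{Nm}, and assume that for every 1 ≤ n ≤ N−1, min_{1≤j≤n} η_{nj} > max_{1≤m≤n+1} η_{n+1,m}. Then the function ℝ^{N(N−1)/2} → ℂ sending ξ = (ξ_{nj})_{1≤j≤n≤N−1} to F(ξ) = ∏_{n=1}^{N−1} [∏_{k=1}^{n}∏_{m=1}^{n+1} ℏ^{(γ_{nk} − γ_{n+1,m})/(iℏ)}·Γ((γ_{nk} − γ_{n+1,m})/(iℏ)) / ∏_{s≠p, s,p≤n} Γ((γ_{ns} − γ_{np})/(iℏ))]·exp((i/ℏ)·Σ_{n=1}^{N}(Σ_{j=1}^{n} γ_{nj} − Σ_{j=1}^{n−1} γ_{n−1,j})·x_n), where γ_{nj} = ξ_{nj} + iη_{nj}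 for n ≤ N−1, is Lebesgue integrable on ℝ^{N(N−1)/2}; that is, the Mellin–Barnes integral representation of the GL(N,ℝ) open Toda chain wave function converges absolutely. -/
open Finset MeasureTheory

noncomputable section

/-- Index set of the Gelfand–Zetlin variables `(n, j)` with `1 ≤ j ≤ n ≤ N − 1`
(the pair `(p.1, p.2)` encodes `(n, j)`). -/
abbrev GZIdx (N : ℕ) := {p : Fin N × Fin N // 1 ≤ (p.2 : ℕ) ∧ (p.2 : ℕ) ≤ (p.1 : ℕ)}

/-- The Gelfand–Zetlin array on the tube: lower levels `γ_{nj} = ξ_{nj} + iη_{nj}`,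
top row `g`. -/
def gzTube (N : ℕ) (g : ℕ → ℂ) (η : ℕ → ℕ → ℝ) (ξ : GZIdx N → ℝ) : GZ := fun n j =>
  if h : 1 ≤ j ∧ j ≤ n ∧ n < N then
    ((ξ ⟨(⟨n, h.2.2⟩, ⟨j, lt_of_le_of_lt h.2.1 h.2.2⟩), h.1, h.2.1⟩ : ℝ) : ℂ) +
      Complex.I * (η n j : ℂ)
  else g j

/-- `ℏ^z := exp(z log ℏ)`. -/
def hpow (ℏ : ℝ) (z : ℂ) : ℂ := Complex.exp (z * (Real.log ℏ : ℂ))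

/-- The integrand of the Mellin–Barnes representation of the `GL(N,ℝ)` open Toda
chain wave function (`x n` is the Toda variable `x_n`, `1 ≤ n ≤ N`). -/
def todaIntegrand (ℏ : ℝ) (N : ℕ) (x : ℕ → ℝ) (γ : GZ) : ℂ :=
  (∏ n ∈ Icc 1 (N - 1),
    (∏ k ∈ Icc 1 n, ∏ m ∈ Icc 1 (n + 1),
      hpow ℏ ((γ n k - γ (n + 1) m) / (Complex.I * ℏ)) *
        Complex.Gamma ((γ n k - γ (n + 1) m) / (Complex.I * ℏ))) /
      ∏ s ∈ Icc 1 n, ∏ p ∈ (Icc 1 n).erase s,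
        Complex.Gamma ((γ n s - γ n p) / (Complex.I * ℏ))) *
    Complex.exp ((Complex.I / (ℏ : ℂ)) * ∑ n ∈ Icc 1 N,
      ((∑ j ∈ Icc 1 n, γ n j) - ∑ j ∈ Icc 1 (n - 1), γ (n - 1) j) * (x n : ℂ))


open Filter Topology

lemma toda_gamma_mono {a b : ℝ} (ha : 0 < a) (hab : a ≤ b) (y : ℝ) :
    ‖Complex.Gamma (a + y * Complex.I)‖ * Real.Gamma b ≤
      ‖Complex.Gamma (b + y * Complex.I)‖ * Real.Gamma a := by
  have hb : 0 < b := lt_of_lt_of_le ha hab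
  have h1 := ((Complex.GammaSeq_tendsto_Gamma (a + y * Complex.I)).norm).mul
    (Real.GammaSeq_tendsto_Gamma b)
  have h2 := ((Complex.GammaSeq_tendsto_Gamma (b + y * Complex.I)).norm).mul
    (Real.GammaSeq_tendsto_Gamma a)
  refine le_of_tendsto_of_tendsto h1 h2 ?_
  filter_upwards [eventually_gt_atTop 0] with n hn
  have hn' : (0 : ℝ) < n := by exact_mod_cast hn
  have key : ∀ c : ℝ, 0 < c → ‖Complex.GammaSeq (c + y * Complex.I) n‖ =
      (n : ℝ) ^ c * n.factorial / ∏ j ∈ Finset.range (n + 1), ‖((c + j : ℝ) : ℂ) + y * Complex.I‖ := by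
    intro c hc
    unfold Complex.GammaSeq
    rw [norm_div, norm_mul, norm_prod (Finset.range (n+1)), Complex.norm_natCast_cpow_of_pos hn, Complex.norm_natCast]
    congr 2
    · simp
    · funext j
      congr 1
      push_cast
      ring
  have hpos : ∀ c : ℝ, 0 < c → ∀ j : ℕ, 0 < ‖((c + j : ℝ) : ℂ) + y * Complex.I‖ := by
    intro c hc j
    rw [norm_pos_iff]
    intro h
    have := congrArg Complex.re h
    simp at this
    have hj : (0:ℝ) ≤ j := Nat.cast_nonneg j
    linarith
  rw [key a ha, key b hb]
  unfold Real.GammaSeq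
  rw [div_mul_div_comm, div_mul_div_comm, ← Finset.prod_mul_distrib, ← Finset.prod_mul_distrib]
  have hle : ∏ j ∈ Finset.range (n + 1), (‖((b + j : ℝ) : ℂ) + y * Complex.I‖ * (a + j)) ≤
      ∏ j ∈ Finset.range (n + 1), (‖((a + j : ℝ) : ℂ) + y * Complex.I‖ * (b + j)) := by
    refine Finset.prod_le_prod (fun j _ => by positivity) fun j _ => ?_
    have hj : (0:ℝ) ≤ j := Nat.cast_nonneg j
    rw [Complex.norm_add_mul_I, Complex.norm_add_mul_I]
    refine le_of_sq_le_sq ?_ (by positivity)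
    rw [mul_pow, mul_pow, Real.sq_sqrt (by positivity), Real.sq_sqrt (by positivity)]
    have : (a + j) ^ 2 ≤ (b + j) ^ 2 := by gcongr
    nlinarith [mul_le_mul_of_nonneg_left this (sq_nonneg y)]
  have hp : 0 < ∏ j ∈ Finset.range (n + 1), (‖((b + j : ℝ) : ℂ) + y * Complex.I‖ * (a + j)) :=
    Finset.prod_pos fun j _ => mul_pos (hpos b hb j) (by positivity)
  calc _ ≤ (n : ℝ) ^ a * n.factorial * ((n : ℝ) ^ b * n.factorial) /
        ∏ j ∈ Finset.range (n + 1), (‖((b + j : ℝ) : ℂ) + y * Complex.I‖ * (a + j)) := by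
        gcongr
    _ = _ := by ring

lemma toda_gamma_half (y : ℝ) :
    ‖Complex.Gamma ((1/2 : ℝ) + y * Complex.I)‖ ^ 2 = Real.pi / Real.cosh (Real.pi * y) := by
  have h := Complex.Gamma_mul_Gamma_one_sub ((1/2 : ℝ) + y * Complex.I)
  have hc : (1 : ℂ) - ((1/2 : ℝ) + y * Complex.I) =
      (starRingEnd ℂ) ((1/2 : ℝ) + y * Complex.I) := by
    apply Complex.ext
    · simp; norm_num
    · simp
  rw [hc, Complex.Gamma_conj, Complex.mul_conj'] at h
  have hs : Complex.sin (Real.pi * ((1/2 : ℝ) + y * Complex.I)) =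
      ((Real.cosh (Real.pi * y) : ℝ) : ℂ) := by
    have : (Real.pi * ((1/2 : ℝ) + y * Complex.I) : ℂ) =
      (Real.pi * y : ℂ) * Complex.I + Real.pi / 2 := by push_cast; ring
    rw [this, Complex.sin_add_pi_div_two, Complex.cos_mul_I]
    push_cast
    rfl
  rw [hs] at h
  exact_mod_cast h

lemma toda_cosh (u : ℝ) : Real.exp |u| / 2 ≤ Real.cosh u ∧ Real.cosh u ≤ Real.exp |u| := by
  rw [← Real.cosh_abs, Real.cosh_eq]
  have h1 := Real.exp_pos (-|u|)
  have h2 : Real.exp (-|u|) ≤ Real.exp |u| := Real.exp_le_exp.2 (by linarith [abs_nonneg u])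
  constructor <;> linarith

lemma toda_half_upper (y : ℝ) : ‖Complex.Gamma ((1/2 : ℝ) + y * Complex.I)‖ ≤
    Real.sqrt (2 * Real.pi) * Real.exp (-(Real.pi / 2) * |y|) := by
  refine le_of_sq_le_sq ?_ (by positivity)
  rw [toda_gamma_half, mul_pow, Real.sq_sqrt (by positivity), ← Real.exp_nat_mul]
  have h := (toda_cosh (Real.pi * y)).1
  rw [abs_mul, abs_of_pos Real.pi_pos] at h
  rw [div_le_iff₀ (Real.cosh_pos _)]
  have : Real.exp (((2 : ℕ) : ℝ) * (-(Real.pi / 2) * |y|)) * Real.exp (Real.pi * |y|) = 1 := by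
    rw [← Real.exp_add, ← Real.exp_zero]; congr 1; push_cast; ring
  have hp := Real.exp_pos (((2 : ℕ) : ℝ) * (-(Real.pi / 2) * |y|))
  calc Real.pi = 2 * Real.pi * (Real.exp (((2 : ℕ) : ℝ) * (-(Real.pi / 2) * |y|)) *
        (Real.exp (Real.pi * |y|) / 2)) := by rw [← mul_div_assoc, this]; ring
    _ ≤ 2 * Real.pi * (Real.exp (((2 : ℕ) : ℝ) * (-(Real.pi / 2) * |y|)) *
        Real.cosh (Real.pi * y)) := by gcongr
    _ = _ := by ring

lemma toda_half_lower (y : ℝ) : Real.exp (-(Real.pi / 2) * |y|) ≤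
    ‖Complex.Gamma ((1/2 : ℝ) + y * Complex.I)‖ := by
  refine le_of_sq_le_sq ?_ (norm_nonneg _)
  rw [toda_gamma_half, ← Real.exp_nat_mul, le_div_iff₀ (Real.cosh_pos _)]
  have h := (toda_cosh (Real.pi * y)).2
  rw [abs_mul, abs_of_pos Real.pi_pos] at h
  have : Real.exp (((2 : ℕ) : ℝ) * (-(Real.pi / 2) * |y|)) * Real.exp (Real.pi * |y|) = 1 := by
    rw [← Real.exp_add, ← Real.exp_zero]; congr 1; push_cast; ring
  calc _ ≤ Real.exp (((2 : ℕ) : ℝ) * (-(Real.pi / 2) * |y|)) * Real.exp (Real.pi * |y|) := by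
        gcongr
    _ = 1 := this
    _ ≤ _ := by linarith [Real.pi_gt_three]

lemma toda_lin (a : ℝ) {ε : ℝ} (hε : 0 < ε) :
    ∃ C : ℝ, 0 ≤ C ∧ ∀ y : ℝ, ‖(a : ℂ) + y * Complex.I‖ ≤ C * Real.exp (ε * |y|) := by
  refine ⟨|a| + 1 / ε, by positivity, fun y => ?_⟩
  have h1 : ‖(a : ℂ) + y * Complex.I‖ ≤ |a| + |y| := by
    refine (norm_add_le _ _).trans ?_
    simp
  have h2 := Real.add_one_le_exp (ε * |y|)
  have h3 : |y| ≤ 1 / ε * Real.exp (ε * |y|) := by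
    rw [one_div, inv_mul_eq_div, le_div_iff₀ hε]; linarith
  have h4 : 1 ≤ Real.exp (ε * |y|) := Real.one_le_exp (by positivity)
  nlinarith [abs_nonneg a]

lemma toda_half_int_upper (m : ℕ) : ∀ ε : ℝ, 0 < ε → ∃ C : ℝ, 0 ≤ C ∧ ∀ y : ℝ,
    ‖Complex.Gamma ((1/2 + m : ℝ) + y * Complex.I)‖ ≤ C * Real.exp (-(Real.pi / 2 - ε) * |y|) := by
  induction m with
  | zero =>
    intro ε hε
    refine ⟨Real.sqrt (2 * Real.pi), by positivity, fun y => ?_⟩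
    have := toda_half_upper y
    simp only [Nat.cast_zero, add_zero]
    refine this.trans ?_
    gcongr
    linarith
  | succ m ih =>
    intro ε hε
    obtain ⟨C1, hC1, h1⟩ := ih (ε / 2) (by positivity)
    obtain ⟨C2, hC2, h2⟩ := toda_lin (1/2 + m) (ε := ε / 2) (by positivity)
    refine ⟨C2 * C1, by positivity, fun y => ?_⟩
    have e : (((1/2 + (m + 1 : ℕ) : ℝ) : ℂ) + y * Complex.I) =
        (((1/2 + m : ℝ) : ℂ) + y * Complex.I) + 1 := by push_cast; ring
    rw [e, Complex.Gamma_add_one, norm_mul]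
    · refine (mul_le_mul (h2 y) (h1 y) (norm_nonneg _) (by positivity)).trans (le_of_eq ?_)
      rw [mul_mul_mul_comm, ← Real.exp_add]
      congr 2
      ring
    · intro h
      have := congrArg Complex.re h
      simp at this
      have hj : (0:ℝ) ≤ m := Nat.cast_nonneg m
      linarith

lemma toda_upper {a : ℝ} (ha : 0 < a) {ε : ℝ} (hε : 0 < ε) : ∃ C : ℝ, 0 ≤ C ∧ ∀ y : ℝ,
    ‖Complex.Gamma (a + y * Complex.I)‖ ≤ C * Real.exp (-(Real.pi / 2 - ε) * |y|) := by
  obtain ⟨m, hm⟩ := exists_nat_ge a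
  obtain ⟨C, hC, h⟩ := toda_half_int_upper m ε hε
  have hb : (0:ℝ) < 1/2 + m := by positivity
  have hGb := Real.Gamma_pos_of_pos hb
  have hGa := Real.Gamma_pos_of_pos ha
  refine ⟨C * Real.Gamma a / Real.Gamma (1/2 + m), by positivity, fun y => ?_⟩
  have h3 := toda_gamma_mono ha (b := 1/2 + m) (by linarith) y
  rw [div_mul_eq_mul_div, le_div_iff₀ hGb]
  refine h3.trans ?_
  have := mul_le_mul_of_nonneg_right (h y) hGa.le
  refine this.trans (le_of_eq (by ring))

lemma toda_lower_aux (m : ℕ) : ∀ a : ℝ, 1/2 - m ≤ a → ∀ ε : ℝ, 0 < ε → ∃ C : ℝ, 0 ≤ C ∧ ∀ y : ℝ,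
    ‖(Complex.Gamma (a + y * Complex.I))⁻¹‖ ≤ C * Real.exp ((Real.pi / 2 + ε) * |y|) := by
  induction m with
  | zero =>
    intro a ha ε hε
    simp only [Nat.cast_zero, sub_zero] at ha
    have ha0 : 0 < a := by linarith
    have hGa := Real.Gamma_pos_of_pos ha0
    have hGh := Real.Gamma_pos_of_pos (show (0:ℝ) < 1/2 by norm_num)
    refine ⟨Real.Gamma (1/2) / Real.Gamma a, by positivity, fun y => ?_⟩
    have h3 := toda_gamma_mono (a := 1/2) (by norm_num) ha y
    have h4 := mul_le_mul_of_nonneg_right (toda_half_lower y) hGa.le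
    have h5 := h4.trans h3
    have h6 : 0 < Real.exp (-(Real.pi / 2) * |y|) * Real.Gamma a := by positivity
    have h7 : 0 < ‖Complex.Gamma (a + y * Complex.I)‖ := by
      by_contra hneg
      have : ‖Complex.Gamma (a + y * Complex.I)‖ = 0 := le_antisymm (not_lt.1 hneg) (norm_nonneg _)
      rw [this, zero_mul] at h5
      linarith
    rw [norm_inv, inv_le_iff_one_le_mul₀ h7, div_mul_eq_mul_div, div_mul_eq_mul_div,
      le_div_iff₀ hGa, one_mul]
    have e : Real.exp ((Real.pi / 2 + ε) * |y|) * Real.exp (-(Real.pi / 2) * |y|) =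
      Real.exp (ε * |y|) := by rw [← Real.exp_add]; congr 1; ring
    have h8 : 1 ≤ Real.exp (ε * |y|) := Real.one_le_exp (by positivity)
    calc Real.Gamma a ≤ Real.exp (ε * |y|) * Real.Gamma a := by nlinarith
      _ = Real.exp ((Real.pi / 2 + ε) * |y|) *
          (Real.exp (-(Real.pi / 2) * |y|) * Real.Gamma a) := by rw [← e]; ring
      _ ≤ Real.exp ((Real.pi / 2 + ε) * |y|) *
          (‖Complex.Gamma (a + y * Complex.I)‖ * Real.Gamma (1/2)) := by gcongr
      _ = _ := by ring
  | succ m ih =>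
    intro a ha ε hε
    push_cast at ha
    obtain ⟨C1, hC1, h1⟩ := ih (a + 1) (by linarith) (ε / 2) (by positivity)
    obtain ⟨C2, hC2, h2⟩ := toda_lin a (ε := ε / 2) (by positivity)
    refine ⟨C2 * C1, by positivity, fun y => ?_⟩
    have e := Complex.one_div_Gamma_eq_self_mul_one_div_Gamma_add_one (a + y * Complex.I)
    have e2 : ((a : ℂ) + y * Complex.I + 1) = (((a + 1 : ℝ) : ℂ) + y * Complex.I) := by
      push_cast; ring
    rw [e2] at e
    rw [e, norm_mul]
    refine (mul_le_mul (h2 y) (h1 y) (norm_nonneg _) (by positivity)).trans (le_of_eq ?_)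
    rw [mul_mul_mul_comm, ← Real.exp_add]
    congr 2
    ring

lemma toda_lower (a : ℝ) {ε : ℝ} (hε : 0 < ε) : ∃ C : ℝ, 0 ≤ C ∧ ∀ y : ℝ,
    ‖(Complex.Gamma (a + y * Complex.I))⁻¹‖ ≤ C * Real.exp ((Real.pi / 2 + ε) * |y|) := by
  obtain ⟨m, hm⟩ := exists_nat_ge (1/2 - a)
  exact toda_lower_aux m a (by linarith) ε hε

lemma toda_gamma_meas : Measurable Complex.Gamma := by
  have h : Measurable fun s => (Complex.Gamma s)⁻¹ :=
    Complex.differentiable_one_div_Gamma.continuous.measurable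
  have h2 := h.inv
  have e : (fun s => (Complex.Gamma s)⁻¹)⁻¹ = Complex.Gamma := by funext s; simp
  rwa [e] at h2

/-- cut indicator -/
def todaInd (a t : ℝ) : ℝ := if t < a then 1 else 0

lemma todaInd_eq (a b : ℝ) : (fun t => |todaInd a t - todaInd b t|) =
    (Set.Ico (min a b) (max a b)).indicator (fun _ => (1:ℝ)) := by
  funext t
  unfold todaInd
  by_cases h1 : t < a <;> by_cases h2 : t < b <;>
    simp [Set.indicator, h1, h2, not_lt.1, not_le.2]

lemma todaInd_integrable (a b : ℝ) : Integrable (fun t => |todaInd a t - todaInd b t|) := by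
  rw [todaInd_eq, integrable_indicator_iff measurableSet_Ico]
  simp

lemma todaInd_integral (a b : ℝ) : ∫ t, |todaInd a t - todaInd b t| = |a - b| := by
  rw [todaInd_eq, integral_indicator_const _ measurableSet_Ico]
  simp [max_sub_min_eq_abs']

lemma todaInd_sq (a t : ℝ) : todaInd a t * todaInd a t = todaInd a t := by
  unfold todaInd; split_ifs <;> simp

lemma todaInd_abs (a b t : ℝ) : |todaInd a t - todaInd b t| =
    todaInd a t + todaInd b t - 2 * (todaInd a t * todaInd b t) := by
  unfold todaInd; split_ifs <;> norm_num

lemma todaInd_sum (s : Finset ℕ) (x : ℕ → ℝ) (t : ℝ) :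
    ∑ k ∈ s, todaInd (x k) t = ((s.filter fun k => t < x k).card : ℝ) := by
  unfold todaInd; simp

lemma toda_pair_sum (s t : Finset ℕ) (x y : ℕ → ℝ) (τ : ℝ) :
    ∑ k ∈ s, ∑ m ∈ t, |todaInd (x k) τ - todaInd (y m) τ| =
      t.card * ∑ k ∈ s, todaInd (x k) τ + s.card * ∑ m ∈ t, todaInd (y m) τ
        - 2 * ((∑ k ∈ s, todaInd (x k) τ) * ∑ m ∈ t, todaInd (y m) τ) := by
  simp only [todaInd_abs, Finset.sum_sub_distrib, Finset.sum_add_distrib, Finset.sum_const,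
    ← Finset.mul_sum, ← Finset.sum_mul, nsmul_eq_mul]

lemma toda_cut_pointwise (s t : Finset ℕ) (x y : ℕ → ℝ) (hc : t.card = s.card + 1)
    (Y : ℝ) (hY : ∀ m ∈ t, |y m| ≤ Y) (k : ℕ) (hk : k ∈ s) (τ : ℝ) :
    2 * |todaInd (x k) τ - todaInd (max (-Y) (min Y (x k))) τ| ≤
      ∑ k ∈ s, ∑ m ∈ t, |todaInd (x k) τ - todaInd (y m) τ|
      - (∑ k ∈ s, ∑ m ∈ s, |todaInd (x k) τ - todaInd (x m) τ|) / 2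
      - (∑ k ∈ t, ∑ m ∈ t, |todaInd (y k) τ - todaInd (y m) τ|) / 2 := by
  rw [toda_pair_sum, toda_pair_sum, toda_pair_sum, todaInd_sum, todaInd_sum, hc]
  set P := (s.filter fun k => τ < x k).card with hP
  set Q := (t.filter fun k => τ < y k).card with hQ
  have hsub : ((s.card + 1 : ℕ) : ℝ) * P + s.card * Q - 2 * (P * Q)
      - (s.card * P + s.card * P - 2 * (P * P)) / 2
      - (((s.card + 1 : ℕ) : ℝ) * Q + ((s.card + 1 : ℕ) : ℝ) * Q - 2 * (Q * Q)) / 2 =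
      ((((Q : ℤ) - P) * ((Q : ℤ) - P - 1) : ℤ) : ℝ) := by
    push_cast; ring
  rw [hsub]
  have hYn : 0 ≤ Y := by
    have : 0 < t.card := by omega
    obtain ⟨m, hm⟩ := Finset.card_pos.1 this
    exact (abs_nonneg _).trans (hY m hm)
  have hgen : ∀ d : ℤ, 0 ≤ d * (d - 1) := by
    intro d
    rcases le_or_gt d 0 with h | h <;> nlinarith
  by_cases h1 : τ < x k <;> by_cases h2 : τ < max (-Y) (min Y (x k))
  · simp only [todaInd, h1, h2, if_true, sub_self, abs_zero, mul_zero]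
    exact_mod_cast hgen _
  · -- no y above
    have hτ : Y ≤ τ := by grind
    have hQ0 : Q = 0 := by
      rw [hQ, Finset.card_eq_zero, Finset.filter_eq_empty_iff]
      intro m hm
      have := le_abs_self (y m)
      have := hY m hm
      linarith
    have hP1 : 1 ≤ P := Finset.card_pos.2 ⟨k, by simp [hk, h1]⟩
    simp only [todaInd, h1, h2, if_true, if_false]
    rw [hQ0]
    have : (2 : ℤ) ≤ (((0 : ℕ) : ℤ) - P) * (((0 : ℕ) : ℤ) - P - 1) := by
      have : (1 : ℤ) ≤ P := by exact_mod_cast hP1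
      push_cast
      nlinarith
    have h' : ((2 : ℤ) : ℝ) ≤ _ := Int.cast_le.2 this
    norm_num at h' ⊢
    linarith
  · have hτ : τ < -Y := by grind
    have hQ0 : Q = s.card + 1 := by
      rw [hQ, ← hc, Finset.filter_true_of_mem]
      intro m hm
      have := neg_abs_le (y m)
      have := hY m hm
      linarith
    have hP1 : P < s.card := by
      refine Finset.card_lt_card ⟨Finset.filter_subset _ _, fun h => ?_⟩
      have := h hk
      simp [h1] at this
    simp only [todaInd, h1, h2, if_true, if_false]
    have : (2 : ℤ) ≤ ((Q : ℤ) - P) * ((Q : ℤ) - P - 1) := by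
      have : (2 : ℤ) ≤ (Q : ℤ) - P := by omega
      nlinarith
    have h' : ((2 : ℤ) : ℝ) ≤ _ := Int.cast_le.2 this
    norm_num at h' ⊢
    linarith
  · simp only [todaInd, h1, h2, if_false, sub_self, abs_zero, mul_zero]
    exact_mod_cast hgen _

lemma toda_sum_int (s t : Finset ℕ) (x y : ℕ → ℝ) :
    Integrable (fun τ => ∑ k ∈ s, ∑ m ∈ t, |todaInd (x k) τ - todaInd (y m) τ|) ∧
    ∫ τ, ∑ k ∈ s, ∑ m ∈ t, |todaInd (x k) τ - todaInd (y m) τ| =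
      ∑ k ∈ s, ∑ m ∈ t, |x k - y m| := by
  have h : ∀ k ∈ s, Integrable (fun τ => ∑ m ∈ t, |todaInd (x k) τ - todaInd (y m) τ|) :=
    fun k _ => integrable_finsetSum _ fun m _ => todaInd_integrable _ _
  refine ⟨integrable_finsetSum _ h, ?_⟩
  rw [integral_finsetSum _ h]
  refine Finset.sum_congr rfl fun k _ => ?_
  rw [integral_finsetSum _ fun m _ => todaInd_integrable _ _]
  exact Finset.sum_congr rfl fun m _ => todaInd_integral _ _

/-- energy of two families -/
def todaD (s t : Finset ℕ) (x y : ℕ → ℝ) : ℝ :=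
  ∑ k ∈ s, ∑ m ∈ t, |x k - y m| - (∑ k ∈ s, ∑ m ∈ s, |x k - x m|) / 2
    - (∑ k ∈ t, ∑ m ∈ t, |y k - y m|) / 2

lemma toda_cut (s t : Finset ℕ) (x y : ℕ → ℝ) (hc : t.card = s.card + 1)
    (Y : ℝ) (hY : ∀ m ∈ t, |y m| ≤ Y) (k : ℕ) (hk : k ∈ s) :
    2 * |x k - max (-Y) (min Y (x k))| ≤ todaD s t x y := by
  have h := integral_mono (μ := volume)
    ((todaInd_integrable (x k) (max (-Y) (min Y (x k)))).const_mul 2)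
    (((toda_sum_int s t x y).1.sub ((toda_sum_int s s x x).1.div_const 2)).sub
      ((toda_sum_int t t y y).1.div_const 2))
    (fun τ => toda_cut_pointwise s t x y hc Y hY k hk τ)
  simp only [Pi.sub_apply] at h
  rw [integral_const_mul, todaInd_integral, integral_sub, integral_sub, integral_div, integral_div,
    (toda_sum_int s t x y).2, (toda_sum_int s s x x).2, (toda_sum_int t t y y).2] at h
  · exact h
  · exact (toda_sum_int s t x y).1
  · exact (toda_sum_int s s x x).1.div_const 2
  · exact (toda_sum_int s t x y).1.sub ((toda_sum_int s s x x).1.div_const 2)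
  · exact (toda_sum_int t t y y).1.div_const 2

lemma todaD_nonneg (s t : Finset ℕ) (x y : ℕ → ℝ) (hc : t.card = s.card + 1)
    (hs : s.Nonempty) : 0 ≤ todaD s t x y := by
  obtain ⟨k, hk⟩ := hs
  refine le_trans (by positivity) (toda_cut s t x y hc (∑ m ∈ t, |y m|) (fun m hm =>
    Finset.single_le_sum (f := fun m => |y m|) (fun _ _ => abs_nonneg _) hm) k hk)

lemma todaD_bound (s t : Finset ℕ) (x y : ℕ → ℝ) (hc : t.card = s.card + 1)
    (Y : ℝ) (hY : ∀ m ∈ t, |y m| ≤ Y) (k : ℕ) (hk : k ∈ s) :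
    |x k| ≤ Y + todaD s t x y := by
  have h := toda_cut s t x y hc Y hY k hk
  have hYn : 0 ≤ Y := by
    have : 0 < t.card := by omega
    obtain ⟨m, hm⟩ := Finset.card_pos.1 this
    exact (abs_nonneg _).trans (hY m hm)
  have h3 : |max (-Y) (min Y (x k))| ≤ Y := by
    rw [abs_le]; constructor <;> grind
  have h4 := abs_sub_abs_le_abs_sub (x k) (max (-Y) (min Y (x k)))
  have h5 := abs_nonneg (x k - max (-Y) (min Y (x k)))
  linarith

/-- Global coercivity of the exponent. -/
lemma toda_coercive (N : ℕ) (hN : 2 ≤ N) (Y0 : ℝ) (hY0 : 0 ≤ Y0) (δ : ℝ) (hδ : 0 < δ) :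
    ∃ ε : ℝ, 0 < ε ∧ ∃ c : ℝ, 0 < c ∧ ∃ K : ℝ, ∀ y : ℕ → ℕ → ℝ,
      (∀ m ∈ Icc 1 N, |y N m| ≤ Y0) →
      ∀ n ∈ Icc 1 (N - 1), ∀ j ∈ Icc 1 n,
      ∑ n ∈ Icc 1 (N - 1), ((∑ k ∈ Icc 1 n, ∑ m ∈ Icc 1 (n + 1), -(δ - ε) * |y n k - y (n + 1) m|)
        + ∑ s ∈ Icc 1 n, ∑ p ∈ (Icc 1 n).erase s, (δ + ε) * |y n s - y n p|) ≤
        K - c * |y n j| := by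
  set R : ℝ := ∑ n ∈ Icc 1 (N - 1), ((n : ℝ) * ((n + 1 : ℕ) : ℝ) * 2 + (n : ℝ) * n * 2) with hR
  have hRn : 0 ≤ R := by positivity
  have hNp : (0 : ℝ) < N := by positivity
  set ε : ℝ := δ / (2 * (R * N + 1)) with hε
  have hεp : 0 < ε := by positivity
  have hεR : ε * R * N ≤ δ / 2 := by
    rw [hε, div_mul_eq_mul_div, div_mul_eq_mul_div, div_le_div_iff₀ (by positivity) (by norm_num)]
    nlinarith
  refine ⟨ε, hεp, δ / 2 / N, by positivity, ε * R * Y0 + δ / 2 / N * Y0, ?_⟩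
  intro y hy n0 hn0 j0 hj0
  set B : ℕ → ℝ := fun n => ∑ k ∈ Icc 1 n, ∑ m ∈ Icc 1 (n + 1), |y n k - y (n + 1) m| with hB
  set S : ℕ → ℝ := fun n => ∑ k ∈ Icc 1 n, ∑ m ∈ Icc 1 n, |y n k - y n m| with hS
  set Dn : ℕ → ℝ := fun n => todaD (Icc 1 n) (Icc 1 (n + 1)) (y n) (y (n + 1)) with hDn
  have hDeq : ∀ n, Dn n = B n - S n / 2 - S (n + 1) / 2 := fun n => rfl
  set D : ℝ := ∑ n ∈ Icc 1 (N - 1), Dn n with hD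
  have hDnn : ∀ n ∈ Icc 1 (N - 1), 0 ≤ Dn n := by
    intro n hn
    refine todaD_nonneg _ _ _ _ (by simp) ?_
    rw [Finset.mem_Icc] at hn
    exact ⟨1, by simp; omega⟩
  have hD0 : 0 ≤ D := Finset.sum_nonneg hDnn
  have hDle : ∀ n ∈ Icc 1 (N - 1), Dn n ≤ D := fun n hn => Finset.single_le_sum hDnn hn
  have hbd : ∀ i : ℕ, i < N → ∀ k ∈ Icc 1 (N - i), |y (N - i) k| ≤ Y0 + i * D := by
    intro i
    induction i with
    | zero => intro _ k hk; simpa using hy k (by simpa using hk)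
    | succ i ih =>
      intro hi k hk
      have ih' := ih (by omega)
      have e : N - i = N - (i + 1) + 1 := by omega
      rw [e] at ih'
      have h1 := todaD_bound (Icc 1 (N - (i + 1))) (Icc 1 (N - (i + 1) + 1)) (y (N - (i + 1)))
        (y (N - (i + 1) + 1)) (by simp) _ ih' k hk
      have h2 := hDle (N - (i + 1)) (by rw [Finset.mem_Icc]; omega)
      simp only [hDn] at h2
      push_cast
      linarith
  have hall : ∀ n, 1 ≤ n → n ≤ N → ∀ k ∈ Icc 1 n, |y n k| ≤ Y0 + N * D := by
    intro n h1 h2 k hk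
    have := hbd (N - n) (by omega)
    have e : N - (N - n) = n := by omega
    rw [e] at this
    refine (this k hk).trans ?_
    have : ((N - n : ℕ) : ℝ) ≤ N := by exact_mod_cast Nat.sub_le _ _
    nlinarith
  have hdiff : ∀ a b : ℝ, |a| ≤ Y0 + N * D → |b| ≤ Y0 + N * D → |a - b| ≤ 2 * (Y0 + N * D) := by
    intro a b ha hb
    have := abs_sub a b
    linarith
  have hBS : ∑ n ∈ Icc 1 (N - 1), (B n + S n) ≤ R * (Y0 + N * D) := by
    rw [hR, Finset.sum_mul]
    refine Finset.sum_le_sum fun n hn => ?_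
    rw [Finset.mem_Icc] at hn
    have hb : B n ≤ ∑ k ∈ Icc 1 n, ∑ m ∈ Icc 1 (n + 1), 2 * (Y0 + N * D) :=
      Finset.sum_le_sum fun k hk => Finset.sum_le_sum fun m hm =>
        hdiff _ _ (hall n (by omega) (by omega) k hk) (hall (n + 1) (by omega) (by omega) m hm)
    have hs : S n ≤ ∑ k ∈ Icc 1 n, ∑ m ∈ Icc 1 n, 2 * (Y0 + N * D) :=
      Finset.sum_le_sum fun k hk => Finset.sum_le_sum fun m hm =>
        hdiff _ _ (hall n (by omega) (by omega) k hk) (hall n (by omega) (by omega) m hm)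
    simp only [Finset.sum_const, Nat.card_Icc, nsmul_eq_mul, Nat.add_sub_cancel] at hb hs
    linarith
  have htel : ∀ M : ℕ, ∑ n ∈ Icc 1 M, (B n - S n) =
      ∑ n ∈ Icc 1 M, Dn n + S (M + 1) / 2 - S 1 / 2 := by
    intro M
    induction M with
    | zero => simp
    | succ M ih =>
      rw [Finset.sum_Icc_succ_top (by omega), Finset.sum_Icc_succ_top (by omega), ih, hDeq]
      ring
  have hS1 : S 1 = 0 := by simp [hS]
  have hSN : 0 ≤ S (N - 1 + 1) := by positivity
  have hBmS : D ≤ ∑ n ∈ Icc 1 (N - 1), (B n - S n) := by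
    rw [htel, hS1]; linarith
  have hE : ∑ n ∈ Icc 1 (N - 1),
        ((∑ k ∈ Icc 1 n, ∑ m ∈ Icc 1 (n + 1), -(δ - ε) * |y n k - y (n + 1) m|)
        + ∑ s ∈ Icc 1 n, ∑ p ∈ (Icc 1 n).erase s, (δ + ε) * |y n s - y n p|) =
      -δ * ∑ n ∈ Icc 1 (N - 1), (B n - S n) + ε * ∑ n ∈ Icc 1 (N - 1), (B n + S n) := by
    rw [Finset.mul_sum, Finset.mul_sum, ← Finset.sum_add_distrib]
    refine Finset.sum_congr rfl fun n _ => ?_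
    have h1 : ∑ s ∈ Icc 1 n, ∑ p ∈ (Icc 1 n).erase s, (δ + ε) * |y n s - y n p| =
        (δ + ε) * S n := by
      rw [hS]
      simp only [Finset.mul_sum]
      refine Finset.sum_congr rfl fun s hs => ?_
      exact Finset.sum_erase _ (by simp)
    have h2 : ∑ k ∈ Icc 1 n, ∑ m ∈ Icc 1 (n + 1), -(δ - ε) * |y n k - y (n + 1) m| =
        -(δ - ε) * B n := by
      rw [hB]
      simp only [Finset.mul_sum]
    rw [h1, h2]
    ring
  rw [hE]
  have hn0' := Finset.mem_Icc.1 hn0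
  have hfin := hall n0 (by omega) (by omega) j0 hj0
  have a1 : δ * D ≤ δ * ∑ n ∈ Icc 1 (N - 1), (B n - S n) := by gcongr
  have a2 : ε * ∑ n ∈ Icc 1 (N - 1), (B n + S n) ≤ ε * (R * (Y0 + N * D)) := by gcongr
  have a3 : ε * R * N * D ≤ δ / 2 * D := by gcongr
  have a4 : δ / 2 / N * |y n0 j0| ≤ δ / 2 / N * (Y0 + N * D) := by gcongr
  have a5 : δ / 2 / N * (Y0 + N * D) = δ / 2 / N * Y0 + δ / 2 * D := by field_simp
  linarith

/-- exponential bound -/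
def TodaBd {α : Type*} (f : α → ℂ) (e : α → ℝ) : Prop :=
  ∃ C : ℝ, 0 ≤ C ∧ ∀ ξ, ‖f ξ‖ ≤ C * Real.exp (e ξ)

lemma TodaBd.mul {α : Type*} {f g : α → ℂ} {e e' : α → ℝ} (hf : TodaBd f e) (hg : TodaBd g e') :
    TodaBd (fun ξ => f ξ * g ξ) (fun ξ => e ξ + e' ξ) := by
  obtain ⟨C, hC, h⟩ := hf
  obtain ⟨C', hC', h'⟩ := hg
  refine ⟨C * C', by positivity, fun ξ => ?_⟩
  rw [norm_mul, Real.exp_add]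
  refine (mul_le_mul (h ξ) (h' ξ) (norm_nonneg _) (by positivity)).trans (le_of_eq (by ring))

lemma TodaBd.prod {α ι : Type*} (s : Finset ι) {f : ι → α → ℂ} {e : ι → α → ℝ}
    (hf : ∀ i ∈ s, TodaBd (f i) (e i)) :
    TodaBd (fun ξ => ∏ i ∈ s, f i ξ) (fun ξ => ∑ i ∈ s, e i ξ) := by
  classical
  induction s using Finset.induction_on with
  | empty => exact ⟨1, by simp, by simp⟩
  | insert a s ha ih =>
    simp only [Finset.prod_insert ha, Finset.sum_insert ha]
    exact (hf a (by simp)).mul (ih fun i hi => hf i (by simp [hi]))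

lemma toda_arg (ℏ : ℝ) (hℏ : 0 < ℏ) (z w : ℂ) :
    (z - w) / (Complex.I * ℏ) = (((z.im - w.im) / ℏ : ℝ) : ℂ) +
      ((-(z.re - w.re) / ℏ : ℝ) : ℂ) * Complex.I := by
  have h : (ℏ : ℂ) ≠ 0 := by exact_mod_cast hℏ.ne'
  rw [div_eq_iff (mul_ne_zero Complex.I_ne_zero h)]
  have e1 : ((((z.im - w.im) / ℏ : ℝ) : ℂ) + ((-(z.re - w.re) / ℏ : ℝ) : ℂ) * Complex.I) *
      (Complex.I * ℏ) = (z.im - w.im) * Complex.I - (z.re - w.re) * (Complex.I * Complex.I) *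
        (1 : ℂ) := by
    push_cast
    field_simp
    ring
  rw [e1, Complex.I_mul_I]
  apply Complex.ext <;> simp

lemma toda_bd_gamma {α : Type*} (ℏ : ℝ) (hℏ : 0 < ℏ) (z w : α → ℂ) (p q : ℝ) (hpq : q < p)
    (hz : ∀ ξ, (z ξ).im = p) (hw : ∀ ξ, (w ξ).im = q) (ε : ℝ) (hε : 0 < ε) :
    TodaBd (fun ξ => Complex.Gamma ((z ξ - w ξ) / (Complex.I * ℏ)))
      (fun ξ => -(Real.pi / 2 / ℏ - ε) * |(z ξ).re - (w ξ).re|) := by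
  obtain ⟨C, hC, h⟩ := toda_upper (a := (p - q) / ℏ) (div_pos (by linarith) hℏ)
    (ε := ε * ℏ) (by positivity)
  refine ⟨C, hC, fun ξ => ?_⟩
  beta_reduce
  rw [toda_arg ℏ hℏ, hz, hw]
  refine (h _).trans (le_of_eq ?_)
  rw [abs_div, abs_neg, abs_of_pos hℏ]
  congr 2
  field_simp

lemma toda_bd_gamma_inv {α : Type*} (ℏ : ℝ) (hℏ : 0 < ℏ) (z w : α → ℂ) (p q : ℝ)
    (hz : ∀ ξ, (z ξ).im = p) (hw : ∀ ξ, (w ξ).im = q) (ε : ℝ) (hε : 0 < ε) :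
    TodaBd (fun ξ => (Complex.Gamma ((z ξ - w ξ) / (Complex.I * ℏ)))⁻¹)
      (fun ξ => (Real.pi / 2 / ℏ + ε) * |(z ξ).re - (w ξ).re|) := by
  obtain ⟨C, hC, h⟩ := toda_lower ((p - q) / ℏ) (ε := ε * ℏ) (by positivity)
  refine ⟨C, hC, fun ξ => ?_⟩
  beta_reduce
  rw [toda_arg ℏ hℏ, hz, hw]
  refine (h _).trans (le_of_eq ?_)
  rw [abs_div, abs_neg, abs_of_pos hℏ]
  congr 2
  field_simp

lemma toda_bd_hpow {α : Type*} (ℏ : ℝ) (hℏ : 0 < ℏ) (z w : α → ℂ) (p q : ℝ)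
    (hz : ∀ ξ, (z ξ).im = p) (hw : ∀ ξ, (w ξ).im = q) :
    TodaBd (fun ξ => hpow ℏ ((z ξ - w ξ) / (Complex.I * ℏ))) (fun _ => 0) := by
  refine ⟨Real.exp ((p - q) / ℏ * Real.log ℏ), by positivity, fun ξ => ?_⟩
  beta_reduce
  rw [toda_arg ℏ hℏ, hz, hw, hpow, Complex.norm_exp]
  simp

lemma gzTube_measurable (N : ℕ) (g : ℕ → ℂ) (η : ℕ → ℕ → ℝ) (n j : ℕ) :
    Measurable (fun ξ => gzTube N g η ξ n j) := by
  unfold gzTube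
  split_ifs
  · exact (Complex.measurable_ofReal.comp (measurable_pi_apply _)).add_const _
  · exact measurable_const

lemma toda_measurable (ℏ : ℝ) (N : ℕ) (g : ℕ → ℂ) (η : ℕ → ℕ → ℝ) (x : ℕ → ℝ) :
    Measurable (fun ξ => todaIntegrand ℏ N x (gzTube N g η ξ)) := by
  have hm := gzTube_measurable N g η
  have hG := toda_gamma_meas
  unfold todaIntegrand hpow
  refine Measurable.mul ?_ (Complex.measurable_exp.comp (Measurable.const_mul ?_ _))
  · refine Finset.measurable_fun_prod _ fun n _ => Measurable.div ?_ ?_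
    · refine Finset.measurable_fun_prod _ fun k _ => Finset.measurable_fun_prod _ fun m _ => ?_
      have h0 := ((hm n k).sub (hm (n + 1) m)).div_const (Complex.I * ℏ)
      exact (Complex.measurable_exp.comp (h0.mul_const _)).mul (hG.comp h0)
    · refine Finset.measurable_fun_prod _ fun k _ => Finset.measurable_fun_prod _ fun m _ => ?_
      exact hG.comp (((hm n k).sub (hm n m)).div_const (Complex.I * ℏ))
  · refine Finset.measurable_fun_sum _ fun n _ => Measurable.mul_const (Measurable.sub ?_ ?_) _
    · exact Finset.measurable_fun_sum _ fun j _ => hm _ _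
    · exact Finset.measurable_fun_sum _ fun j _ => hm _ _

lemma gzTube_im (N : ℕ) (g : ℕ → ℂ) (η : ℕ → ℕ → ℝ) (hηtop : ∀ k, η N k = (g k).im)
    (ξ : GZIdx N → ℝ) (n j : ℕ) (hn : n ≤ N) (hj : j ∈ Icc 1 n) :
    (gzTube N g η ξ n j).im = η n j := by
  rw [Finset.mem_Icc] at hj
  unfold gzTube
  split_ifs with h
  · simp
  · have : n = N := by omega
    rw [this, hηtop]

lemma toda_exp_integrable (c : ℝ) (hc : 0 < c) : Integrable (fun t : ℝ => Real.exp (-c * |t|)) := by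
  have h1 : IntegrableOn (fun t : ℝ => Real.exp (-c * |t|)) (Set.Ioi 0) :=
    (integrableOn_exp_mul_Ioi (a := -c) (by linarith) 0).congr_fun
      (fun t ht => by simp only [abs_of_pos (Set.mem_Ioi.1 ht)]) measurableSet_Ioi
  have h2 : IntegrableOn (fun t : ℝ => Real.exp (-c * |t|)) (Set.Iic 0) :=
    (integrableOn_exp_mul_Iic (a := c) hc 0).congr_fun
      (fun t ht => by simp only [abs_of_nonpos (Set.mem_Iic.1 ht), neg_mul_neg]) measurableSet_Iic
  rw [← integrableOn_univ, ← Set.Iic_union_Ioi (a := (0:ℝ))]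
  exact h2.union h1

/-- absolute convergence of the Mellin–Barnes integral representation
of the `GL(N,ℝ)` open Toda chain wave function, on any tube with
`min_j η_{nj} > max_m η_{n+1,m}` between consecutive levels. -/
theorem toda_integrand_integrable (ℏ : ℝ) (hℏ : 0 < ℏ) (N : ℕ) (hN : 2 ≤ N)
    (γtop : ℕ → ℂ) (η : ℕ → ℕ → ℝ)
    (hηtop : ∀ k, η N k = (γtop k).im)
    (hη : ∀ n : ℕ, 1 ≤ n → n ≤ N - 1 → ∀ j ∈ Icc 1 n, ∀ m ∈ Icc 1 (n + 1),
      η (n + 1) m < η n j)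
    (x : ℕ → ℝ) :
    Integrable (fun ξ : GZIdx N → ℝ => todaIntegrand ℏ N x (gzTube N γtop η ξ)) := by

  set α := GZIdx N → ℝ
  set Y0 : ℝ := ∑ m ∈ Icc 1 N, |(γtop m).re| with hY0
  have hY0n : 0 ≤ Y0 := by positivity
  obtain ⟨ε, hε, c, hc, K, hco⟩ := toda_coercive N hN Y0 hY0n (Real.pi / 2 / ℏ) (by positivity)
  have him := gzTube_im N γtop η hηtop
  have hbd : TodaBd (fun ξ : α => todaIntegrand ℏ N x (gzTube N γtop η ξ))
      (fun ξ => ∑ n ∈ Icc 1 (N - 1), ((∑ k ∈ Icc 1 n, ∑ m ∈ Icc 1 (n + 1),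
        (0 + -(Real.pi / 2 / ℏ - ε) *
          |(gzTube N γtop η ξ n k).re - (gzTube N γtop η ξ (n + 1) m).re|))
        + ∑ s ∈ Icc 1 n, ∑ p ∈ (Icc 1 n).erase s, (Real.pi / 2 / ℏ + ε) *
          |(gzTube N γtop η ξ n s).re - (gzTube N γtop η ξ n p).re|) + 0) := by
    unfold todaIntegrand
    refine TodaBd.mul (TodaBd.prod _ fun n hn => ?_) ?_
    · rw [Finset.mem_Icc] at hn
      simp only [div_eq_mul_inv (∏ k ∈ Icc 1 n, _), ← Finset.prod_inv_distrib]
      refine TodaBd.mul (TodaBd.prod _ fun k hk => TodaBd.prod _ fun m hm => ?_)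
        (TodaBd.prod _ fun s hs => TodaBd.prod _ fun p hp => ?_)
      · have hz := fun ξ => him ξ n k (by omega) hk
        have hw := fun ξ => him ξ (n + 1) m (by omega) hm
        exact (toda_bd_hpow ℏ hℏ _ _ _ _ hz hw).mul
          (toda_bd_gamma ℏ hℏ _ _ _ _ (hη n hn.1 hn.2 k hk m hm) hz hw ε hε)
      · have hz := fun ξ => him ξ n s (by omega) hs
        have hw := fun ξ => him ξ n p (by omega) (Finset.mem_of_mem_erase hp)
        exact toda_bd_gamma_inv ℏ hℏ _ _ _ _ hz hw ε hε
    · refine ⟨Real.exp (-(1 / ℏ) * ∑ n ∈ Icc 1 N,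
        ((∑ j ∈ Icc 1 n, η n j) - ∑ j ∈ Icc 1 (n - 1), η (n - 1) j) * x n), by positivity,
        fun ξ => ?_⟩
      rw [Complex.norm_exp, Real.exp_zero, mul_one]
      refine Real.exp_le_exp.2 (le_of_eq ?_)
      have e : ∀ z : ℂ, ((Complex.I / (ℏ : ℂ)) * z).re = -(1 / ℏ) * z.im := by
        intro z
        have : (Complex.I / (ℏ : ℂ)) = ((1 / ℏ : ℝ) : ℂ) * Complex.I := by push_cast; ring
        rw [this, mul_assoc, Complex.re_ofReal_mul]
        simp
      rw [e, Complex.im_sum]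
      congr 1
      refine Finset.sum_congr rfl fun n hn => ?_
      rw [Finset.mem_Icc] at hn
      rw [Complex.im_mul_ofReal, Complex.sub_im, Complex.im_sum, Complex.im_sum]
      congr 2
      · exact Finset.sum_congr rfl fun j hj => him ξ n j (by omega) hj
      · exact Finset.sum_congr rfl fun j hj => him ξ (n - 1) j (by omega) hj
  obtain ⟨C, hC, hF⟩ := hbd
  set M : ℝ := (Fintype.card (GZIdx N) : ℝ) + 1 with hM
  have hMp : 0 < M := by positivity
  have hdom : Integrable (fun ξ : α => (C * Real.exp (|K|)) *
      ∏ i, Real.exp (-(c / M) * |ξ i|)) := by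
    refine Integrable.const_mul ?_ _
    exact Integrable.fintype_prod (f := fun _ t => Real.exp (-(c / M) * |t|))
      fun i => toda_exp_integrable _ (by positivity)
  refine hdom.mono' (toda_measurable ℏ N γtop η x).aestronglyMeasurable
    (Filter.Eventually.of_forall fun ξ => (hF ξ).trans ?_)
  rw [← Real.exp_sum, mul_assoc, ← Real.exp_add]
  refine mul_le_mul_of_nonneg_left (Real.exp_le_exp.2 ?_) hC
  simp only [zero_add, add_zero]
  have hco' := hco (fun n j => (gzTube N γtop η ξ n j).re) (by
    intro m hm
    have : gzTube N γtop η ξ N m = γtop m := by simp [gzTube]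
    simp only [this]
    exact Finset.single_le_sum (f := fun m => |(γtop m).re|) (fun _ _ => abs_nonneg _) hm)
  set E := ∑ n ∈ Icc 1 (N - 1), ((∑ k ∈ Icc 1 n, ∑ m ∈ Icc 1 (n + 1),
        (-(Real.pi / 2 / ℏ - ε) *
          |(gzTube N γtop η ξ n k).re - (gzTube N γtop η ξ (n + 1) m).re|))
        + ∑ s ∈ Icc 1 n, ∑ p ∈ (Icc 1 n).erase s, (Real.pi / 2 / ℏ + ε) *
          |(gzTube N γtop η ξ n s).re - (gzTube N γtop η ξ n p).re|) with hE
  have hi : ∀ i : GZIdx N, c * |ξ i| ≤ K - E := by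
    rintro ⟨⟨n, j⟩, h1, h2⟩
    have h3 := n.2
    simp only at h1 h2
    have := hco' n (by rw [Finset.mem_Icc]; omega) j (by rw [Finset.mem_Icc]; omega)
    have e : (gzTube N γtop η ξ n j).re = ξ ⟨⟨n, j⟩, h1, h2⟩ := by
      unfold gzTube
      rw [dif_pos ⟨h1, h2, h3⟩]
      simp
    rw [e] at this
    linarith
  have hEK : E ≤ K := by
    have := hi ⟨⟨⟨1, by omega⟩, ⟨1, by omega⟩⟩, by simp, by simp⟩
    have h2 := mul_nonneg hc.le (abs_nonneg (ξ ⟨⟨⟨1, by omega⟩, ⟨1, by omega⟩⟩, by simp, by simp⟩))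
    linarith
  have hsum : ∑ i, c * |ξ i| ≤ M * (K - E) := by
    refine (Finset.sum_le_sum fun i _ => hi i).trans ?_
    rw [Finset.sum_const, Finset.card_univ, nsmul_eq_mul]
    nlinarith
  have e2 : ∑ i, -(c / M) * |ξ i| = -((∑ i, c * |ξ i|) / M) := by
    rw [Finset.sum_div, ← Finset.sum_neg_distrib]
    exact Finset.sum_congr rfl fun i _ => by ring
  have e3 : (∑ i, c * |ξ i|) / M ≤ K - E := by
    rw [div_le_iff₀ hMp]; linarith
  rw [e2]
  have := le_abs_self K
  linarith
end
end
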